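/- There exists c₀ > 0 such that for all 2π-periodic smooth f, ∫_{-π}^{π} (∂ₓf)³ dx ≤ c₀ ‖f‖_{H^{1/2}_per} ‖f‖²_{H^{3/2}_per}. -/

import Mathlib

/-!
The cubic estimate (3.6) of the paper: there is c₀ > 0 such that for every
smooth 2π-periodic real function f,
  ∫_{-π}^{π} (∂ₓ f)³ dx ≤ c₀ ‖f‖_{H^{1/2}_per} ‖f‖²_{H^{3/2}_per}.
The periodic Sobolev norms are expressed through Fourier coefficients
f̂(k) = (1/2π) ∫_{-π}^{π} f(x) e^{-ikx} dx.
-/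

open MeasureTheory

/-- Fourier coefficients of a 2π-periodic function. -/
noncomputable def fcoef (f : ℝ → ℝ) (k : ℤ) : ℂ :=
  (1 / (2 * Real.pi)) *
    ∫ x in (-Real.pi)..Real.pi, (f x : ℂ) * Complex.exp (-Complex.I * k * x)

/-- The periodic Sobolev norm of order `s`. -/
noncomputable def hNorm (s : ℝ) (a : ℤ → ℂ) : ℝ :=
  Real.sqrt (2 * Real.pi * ∑' k : ℤ, (1 + (k : ℝ) ^ 2) ^ s * ‖a k‖ ^ 2)

/-!
Put `g = ∂ₓf`. Parseval, used twice, turns `∫ g³` into the sum of `ĝ(k) ĝ(l) ĝ(-k-l)` over pairs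
`(k, l)`. By symmetry one may restrict to `|k| ≤ |l|`, and the Cauchy–Schwarz inequality over such
pairs gives `|∫ g³| ≤ C ‖g‖_{H^{1/2}} ‖g‖²_{L²}`, since `∑_{|k| ≤ |l|} 1 = 2|l| + 1`. In terms of
`f` the right-hand side is at most `C ‖f‖_{H^{3/2}} ‖f‖²_{H^1}`, and `H^1` is the midpoint of
`H^{1/2}` and `H^{3/2}`, so that `‖f‖²_{H^1} ≤ ‖f‖_{H^{1/2}} ‖f‖_{H^{3/2}}`.
-/

open AddCircle Set
open scoped ENNReal ComplexConjugate

section TrilinearSum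

theorem tsum_mul_sq_le_sq_mul_sq {ι : Type*} (x y : ι → ℝ≥0∞) :
    (∑' i, x i * y i) ^ 2 ≤ (∑' i, x i ^ 2) * ∑' i, y i ^ 2 := by
  let _ : MeasurableSpace ι := ⊤
  have holder := ENNReal.lintegral_mul_le_Lp_mul_Lq .count Real.HolderConjugate.two_two
    (measurable_from_top (f := x)).aemeasurable (measurable_from_top (f := y)).aemeasurable
  simp only [lintegral_count, Pi.mul_apply, ENNReal.rpow_two] at holder
  calc (∑' i, x i * y i) ^ 2
      ≤ ((∑' i, x i ^ 2) ^ (1 / 2 : ℝ) * (∑' i, y i ^ 2) ^ (1 / 2 : ℝ)) ^ 2 := by gcongr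
    _ = (∑' i, x i ^ 2) * ∑' i, y i ^ 2 := by
      rw [mul_pow, ← ENNReal.rpow_two, ← ENNReal.rpow_two, ← ENNReal.rpow_mul, ← ENNReal.rpow_mul]
      norm_num

theorem tsum_ite_natAbs_le (n : ℕ) (x : ℝ≥0∞) :
    ∑' k : ℤ, (if k.natAbs ≤ n then x else 0) = (2 * n + 1) * x := by
  have support_subset (k : ℤ) (hk : k ∉ Finset.Icc (-n : ℤ) n) :
      (if k.natAbs ≤ n then x else 0) = 0 :=
    if_neg fun h => hk (Finset.mem_Icc.2 (by lia))
  have ball_card : (Finset.Icc (-n : ℤ) n).card = 2 * n + 1 := by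
    rw [Int.card_Icc]; lia
  rw [tsum_eq_sum support_subset, Finset.sum_congr rfl fun k hk => if_pos ?_, Finset.sum_const,
    ball_card, nsmul_eq_mul]
  · push_cast; rfl
  · have := Finset.mem_Icc.1 hk; lia

theorem tsum_natAbs_le_mul_mul_sq_le (a b c : ℤ → ℝ≥0∞) :
    (∑' p : ℤ × ℤ, if p.1.natAbs ≤ p.2.natAbs then a p.1 * b p.2 * c (-p.1 - p.2) else 0) ^ 2 ≤
      (∑' l, (2 * l.natAbs + 1) * b l ^ 2) * ((∑' k, a k ^ 2) * ∑' m, c m ^ 2) := by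
  calc (∑' p : ℤ × ℤ, if p.1.natAbs ≤ p.2.natAbs then a p.1 * b p.2 * c (-p.1 - p.2) else 0) ^ 2
      = (∑' p : ℤ × ℤ, (if p.1.natAbs ≤ p.2.natAbs then b p.2 else 0) *
          (a p.1 * c (-p.1 - p.2))) ^ 2 := by
        congr! 3 with p
        split_ifs <;> ring
    _ ≤ (∑' p : ℤ × ℤ, (if p.1.natAbs ≤ p.2.natAbs then b p.2 else 0) ^ 2) *
          ∑' p : ℤ × ℤ, (a p.1 * c (-p.1 - p.2)) ^ 2 := tsum_mul_sq_le_sq_mul_sq _ _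
    _ = (∑' l, (2 * l.natAbs + 1) * b l ^ 2) * ((∑' k, a k ^ 2) * ∑' m, c m ^ 2) := by
        congr 1
        · rw [ENNReal.tsum_prod', ENNReal.tsum_comm]
          simp only [ite_pow, zero_pow two_ne_zero, tsum_ite_natAbs_le]
        · simp only [ENNReal.tsum_prod', mul_pow, ENNReal.tsum_mul_left]
          have tsum_reflect (k : ℤ) : ∑' l, c (-k - l) ^ 2 = ∑' m, c m ^ 2 :=
            (Equiv.subLeft (-k)).tsum_eq fun m => c m ^ 2
          simp only [tsum_reflect, ENNReal.tsum_mul_right]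

theorem tsum_mul_mul_sq_le (a : ℤ → ℝ≥0∞) :
    (∑' p : ℤ × ℤ, a p.1 * a p.2 * a (-p.1 - p.2)) ^ 2 ≤
      4 * ((∑' l, (2 * l.natAbs + 1) * a l ^ 2) * (∑' k, a k ^ 2) ^ 2) := by
  set w : ℤ × ℤ → ℝ≥0∞ := fun p =>
    if p.1.natAbs ≤ p.2.natAbs then a p.1 * a p.2 * a (-p.1 - p.2) else 0 with hw
  have le_add_swap (p : ℤ × ℤ) : a p.1 * a p.2 * a (-p.1 - p.2) ≤ w p + w p.swap := by
    rcases le_total p.1.natAbs p.2.natAbs with h | h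
    · exact (if_pos h).ge.trans le_self_add
    · refine le_add_left (le_of_eq ?_)
      simp only [hw, Prod.fst_swap, Prod.snd_swap, if_pos h]
      rw [mul_comm (a p.1), neg_sub_comm]
  have le_two_mul : ∑' p : ℤ × ℤ, a p.1 * a p.2 * a (-p.1 - p.2) ≤ 2 * ∑' p, w p := calc
    _ ≤ ∑' p, (w p + w p.swap) := ENNReal.tsum_le_tsum le_add_swap
    _ = 2 * ∑' p, w p := by
      rw [ENNReal.tsum_add, two_mul]
      exact congrArg _ ((Equiv.prodComm ℤ ℤ).tsum_eq w)
  calc (∑' p : ℤ × ℤ, a p.1 * a p.2 * a (-p.1 - p.2)) ^ 2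
      ≤ (2 * ∑' p, w p) ^ 2 := by gcongr
    _ = 4 * (∑' p, w p) ^ 2 := by ring
    _ ≤ 4 * ((∑' l, (2 * l.natAbs + 1) * a l ^ 2) * (∑' k, a k ^ 2) ^ 2) := by
        rw [sq (∑' k, a k ^ 2)]
        gcongr
        exact tsum_natAbs_le_mul_mul_sq_le a a a

end TrilinearSum

section Circle

variable {T : ℝ} [Fact (0 < T)]

theorem fourierCoeff_star (f : AddCircle T → ℂ) (k : ℤ) :
    fourierCoeff (star f) k = conj (fourierCoeff f (-k)) := by
  simp only [fourierCoeff, ← integral_conj, smul_eq_mul, map_mul, ← fourier_neg, neg_neg,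
    Pi.star_apply, RCLike.star_def]

theorem fourierCoeff_fourier_mul (g : AddCircle T → ℂ) (n k : ℤ) :
    fourierCoeff (fun t => fourier n t * g t) k = fourierCoeff g (k - n) := by
  simp only [fourierCoeff, smul_eq_mul, ← mul_assoc, ← fourier_add, neg_sub', sub_neg_eq_add]

theorem hasSum_fourierCoeff_mul_neg {f g : AddCircle T → ℂ} (hf : MemLp f 2 haarAddCircle)
    (hg : MemLp g 2 haarAddCircle) :
    HasSum (fun k => fourierCoeff f k * fourierCoeff g (-k)) (∫ t, f t * g t ∂haarAddCircle) := by
  have inner_left (k : ℤ) :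
      inner ℂ (hg.star.toLp (star g)) (fourierBasis k) = fourierCoeff g (-k) := by
    rw [← inner_conj_symm, ← fourierBasis.repr_apply_apply, fourierBasis_repr,
      fourierCoeff_congr_ae hg.star.coeFn_toLp, fourierCoeff_star, Complex.conj_conj]
  have inner_right (k : ℤ) : inner ℂ (fourierBasis k) (hf.toLp f) = fourierCoeff f k := by
    rw [← fourierBasis.repr_apply_apply, fourierBasis_repr, fourierCoeff_congr_ae hf.coeFn_toLp]
  have inner_total :
      inner ℂ (hg.star.toLp (star g)) (hf.toLp f) = ∫ t, f t * g t ∂haarAddCircle := by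
    rw [L2.inner_def]
    refine integral_congr_ae ?_
    filter_upwards [hf.coeFn_toLp, hg.star.coeFn_toLp] with t hft hgt
    simp [hft, hgt]
  simpa only [inner_left, inner_right, inner_total, mul_comm] using
    fourierBasis.hasSum_inner_mul_inner (hg.star.toLp _) (hf.toLp _)

theorem hasSum_fourierCoeff_mul_sub {f g : AddCircle T → ℂ} (hf : MemLp f 2 haarAddCircle)
    (hg : MemLp g 2 haarAddCircle) (n : ℤ) :
    HasSum (fun l => fourierCoeff f l * fourierCoeff g (n - l)) (fourierCoeff (f * g) n) := by
  have hg_mod : MemLp (fun t => fourier (-n) t * g t) 2 haarAddCircle :=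
    hg.of_le ((map_continuous (fourier (-n))).aestronglyMeasurable.mul hg.aestronglyMeasurable)
      (.of_forall fun t => by rw [norm_mul, fourier_apply, Circle.norm_coe, one_mul])
  convert hasSum_fourierCoeff_mul_neg hf hg_mod using 1
  · simp only [fourierCoeff_fourier_mul, sub_neg_eq_add, neg_add_eq_sub]
  · simp only [fourierCoeff, smul_eq_mul, Pi.mul_apply, mul_left_comm]

theorem enorm_integral_mul_mul_le_tsum {f g h : AddCircle T → ℂ} (hf : MemLp f 2 haarAddCircle)
    (hg : MemLp g 2 haarAddCircle) (hh : MemLp h 2 haarAddCircle)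
    (hgh : MemLp (g * h) 2 haarAddCircle) :
    ‖∫ t, f t * (g t * h t) ∂haarAddCircle‖ₑ ≤
      ∑' p : ℤ × ℤ, ‖fourierCoeff f p.1‖ₑ * ‖fourierCoeff g p.2‖ₑ *
        ‖fourierCoeff h (-p.1 - p.2)‖ₑ := by
  calc ‖∫ t, f t * (g t * h t) ∂haarAddCircle‖ₑ
      = ‖∑' k, fourierCoeff f k * fourierCoeff (g * h) (-k)‖ₑ := by
        rw [(hasSum_fourierCoeff_mul_neg hf hgh).tsum_eq]; rfl
    _ ≤ ∑' k, ‖fourierCoeff f k‖ₑ * ‖fourierCoeff (g * h) (-k)‖ₑ := by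
        simp_rw [← enorm_mul]
        exact enorm_tsum_le_tsum_enorm
    _ ≤ ∑' k, ‖fourierCoeff f k‖ₑ * ∑' l, ‖fourierCoeff g l‖ₑ * ‖fourierCoeff h (-k - l)‖ₑ := by
        gcongr with k
        rw [← (hasSum_fourierCoeff_mul_sub hg hh (-k)).tsum_eq]
        simp_rw [← enorm_mul]
        exact enorm_tsum_le_tsum_enorm
    _ = _ := by simp only [ENNReal.tsum_prod', mul_assoc, ENNReal.tsum_mul_left]

end Circle

section Sobolev

/-- Membership of the sequence `a` of Fourier coefficients in `H^s_per`; it excludes the junk value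
`hNorm s a = 0` of a divergent series. -/
def MemSobolev (s : ℝ) (a : ℤ → ℂ) : Prop :=
  Summable fun k : ℤ => (1 + (k : ℝ) ^ 2) ^ s * ‖a k‖ ^ 2

variable {s t : ℝ} {a : ℤ → ℂ}

theorem MemSobolev.mono (ha : MemSobolev t a) (hst : s ≤ t) : MemSobolev s a := by
  refine Summable.of_nonneg_of_le (fun k => by positivity) (fun k => ?_) ha
  gcongr
  exact le_add_of_nonneg_right (sq_nonneg _)

theorem hNorm_nonneg (s : ℝ) (a : ℤ → ℂ) : 0 ≤ hNorm s a := Real.sqrt_nonneg _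

theorem hNorm_sq (s : ℝ) (a : ℤ → ℂ) :
    hNorm s a ^ 2 = 2 * Real.pi * ∑' k : ℤ, (1 + (k : ℝ) ^ 2) ^ s * ‖a k‖ ^ 2 :=
  Real.sq_sqrt (mul_nonneg Real.two_pi_pos.le (tsum_nonneg fun k => by positivity))

theorem hNorm_midpoint_sq_le (hs : MemSobolev s a) (ht : MemSobolev t a) :
    hNorm ((s + t) / 2) a ^ 2 ≤ hNorm s a * hNorm t a := by
  set x : ℝ → ℤ → ℝ := fun r k => (1 + (k : ℝ) ^ 2) ^ (r / 2) * ‖a k‖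
  have x_nonneg (r : ℝ) (k : ℤ) : 0 ≤ x r k := by positivity
  have x_mul (k : ℤ) : (1 + (k : ℝ) ^ 2) ^ ((s + t) / 2) * ‖a k‖ ^ 2 = x s k * x t k := by
    simp only [x]
    rw [add_div, Real.rpow_add (by positivity)]
    ring
  have x_sq (r : ℝ) (k : ℤ) : (1 + (k : ℝ) ^ 2) ^ r * ‖a k‖ ^ 2 = x r k ^ (2 : ℝ) := by
    simp only [x]
    rw [Real.rpow_two, mul_pow, ← Real.rpow_mul_natCast (by positivity), Nat.cast_ofNat,
      div_mul_cancel₀ r two_ne_zero]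
  unfold MemSobolev at hs ht
  simp only [x_sq] at hs ht
  have cauchy_schwarz := Real.inner_le_Lp_mul_Lq_tsum_of_nonneg .two_two
    (x_nonneg s) (x_nonneg t) hs ht
  rw [← Real.sqrt_eq_rpow, ← Real.sqrt_eq_rpow] at cauchy_schwarz
  calc hNorm ((s + t) / 2) a ^ 2
      = 2 * Real.pi * ∑' k, x s k * x t k := by simp only [hNorm_sq, x_mul]
    _ ≤ 2 * Real.pi * (√(∑' k, x s k ^ (2 : ℝ)) * √(∑' k, x t k ^ (2 : ℝ))) := by gcongr
    _ = hNorm s a * hNorm t a := by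
      simp only [hNorm, x_sq, Real.sqrt_mul Real.two_pi_pos.le]
      rw [mul_mul_mul_comm √(2 * Real.pi), Real.mul_self_sqrt Real.two_pi_pos.le]

theorem ofReal_hNorm_sq (ha : MemSobolev s a) :
    ENNReal.ofReal (hNorm s a ^ 2) =
      ENNReal.ofReal (2 * Real.pi) *
        ∑' k : ℤ, ENNReal.ofReal ((1 + (k : ℝ) ^ 2) ^ s) * ‖a k‖ₑ ^ 2 := by
  rw [hNorm_sq, ENNReal.ofReal_mul Real.two_pi_pos.le,
    ENNReal.ofReal_tsum_of_nonneg (fun k => by positivity) ha]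
  congr! 3 with k
  rw [ENNReal.ofReal_mul (by positivity), ENNReal.ofReal_pow (norm_nonneg _), ofReal_norm]

end Sobolev

section FourierCoefficients

theorem memLp_restrict_Ioc_of_continuous {E : Type*} [NormedAddCommGroup E] {μ : Measure ℝ}
    [IsLocallyFiniteMeasure μ] {g : ℝ → E} (hg : Continuous g) (p : ℝ≥0∞) (a b : ℝ) :
    MemLp g p (μ.restrict (Ioc a b)) := by
  obtain ⟨C, hC⟩ := isCompact_Icc.exists_bound_of_continuousOn (hg.continuousOn (s := Icc a b))
  have : IsFiniteMeasure (μ.restrict (Ioc a b)) := ⟨by simpa using measure_Ioc_lt_top⟩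
  exact .of_bound hg.aestronglyMeasurable C <|
    ae_restrict_of_forall_mem measurableSet_Ioc fun x hx => hC x (Ioc_subset_Icc_self hx)

local instance factTwoPiPos : Fact (0 < 2 * Real.pi) := ⟨Real.two_pi_pos⟩

/-- The `2π`-periodic function that agrees with `g` on `(-π, π]`, as a complex function on the
circle `ℝ / 2πℤ`. -/
noncomputable def circleLift (g : ℝ → ℝ) : AddCircle (2 * Real.pi) → ℂ :=
  liftIoc (2 * Real.pi) (-Real.pi) fun x => (g x : ℂ)

theorem neg_pi_add_two_pi : -Real.pi + 2 * Real.pi = Real.pi := by ring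

theorem memLp_circleLift {g : ℝ → ℝ} {p : ℝ≥0∞}
    (hg : MemLp g p (volume.restrict (Ioc (-Real.pi) Real.pi))) :
    MemLp (circleLift g) p haarAddCircle := by
  have hg_lift : MemLp g p (volume.restrict (Ioc (-Real.pi) (-Real.pi + 2 * Real.pi))) := by
    rwa [neg_pi_add_two_pi]
  exact hg_lift.ofReal.memLp_liftIoc.haarAddCircle

theorem fourierCoeff_circleLift (g : ℝ → ℝ) (k : ℤ) :
    fourierCoeff (circleLift g) k = fcoef g k := by
  rw [fourierCoeff_eq_intervalIntegral _ _ (-Real.pi), neg_pi_add_two_pi, fcoef,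
    Complex.real_smul]
  congr 1
  · push_cast; rfl
  refine intervalIntegral.integral_congr_ae (.of_forall fun x hx => ?_)
  rw [uIoc_of_le (by linarith [Real.pi_pos])] at hx
  rw [circleLift, liftIoc_coe_apply (by rwa [neg_pi_add_two_pi]), fourier_coe_apply,
    smul_eq_mul, mul_comm]
  congr 2
  push_cast
  field_simp

theorem integral_circleLift_cube (g : ℝ → ℝ) :
    ∫ t, circleLift g t * (circleLift g t * circleLift g t) ∂haarAddCircle =
      (((2 * Real.pi)⁻¹ * ∫ x in (-Real.pi)..Real.pi, g x ^ 3 : ℝ) : ℂ) := by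
  have cube_eq_lift : (fun t => circleLift g t * (circleLift g t * circleLift g t)) =
      liftIoc (2 * Real.pi) (-Real.pi) fun x => ((g x ^ 3 : ℝ) : ℂ) := by
    ext t
    simp only [circleLift, ← liftIoc_comp_apply (g := fun z : ℂ => z * (z * z))]
    congr 1
    ext x
    simp only [Function.comp_apply]
    push_cast; ring
  rw [cube_eq_lift, integral_haarAddCircle, integral_liftIoc_eq_intervalIntegral,
    neg_pi_add_two_pi, intervalIntegral.integral_ofReal, Complex.real_smul, Complex.ofReal_mul]

theorem fcoef_deriv {f : ℝ → ℝ} (hf : ContDiff ℝ 1 f) (hper : Function.Periodic f (2 * Real.pi))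
    (k : ℤ) : fcoef (deriv f) k = Complex.I * k * fcoef f k := by
  have exp_deriv (x : ℝ) : HasDerivAt (fun x : ℝ => Complex.exp (-Complex.I * k * x))
      (Complex.exp (-Complex.I * k * x) * (-Complex.I * k)) x := by
    simpa using ((Complex.ofRealCLM.hasDerivAt (x := x)).const_mul (-Complex.I * k)).cexp
  have f_deriv (x : ℝ) : HasDerivAt (fun x : ℝ => (f x : ℂ)) (deriv f x : ℝ) x :=
    (hf.differentiable one_ne_zero x).hasDerivAt.ofReal_comp
  have deriv_cont : Continuous (deriv f) := hf.continuous_deriv le_rfl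
  have f_endpoints : f (-Real.pi) = f Real.pi := by
    rw [← hper (-Real.pi)]; congr 1; ring
  have exp_endpoints : Complex.exp (-Complex.I * k * (-Real.pi : ℝ)) =
      Complex.exp (-Complex.I * k * (Real.pi : ℝ)) :=
    Complex.exp_eq_exp_iff_exists_int.2 ⟨k, by push_cast; ring⟩
  have by_parts := intervalIntegral.integral_mul_deriv_eq_deriv_mul (a := -Real.pi) (b := Real.pi)
    (fun x _ => f_deriv x) (fun x _ => exp_deriv x)
    ((Complex.continuous_ofReal.comp deriv_cont).intervalIntegrable _ _)
    (Continuous.intervalIntegrable (by fun_prop) _ _)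
  rw [f_endpoints, exp_endpoints, sub_self, zero_sub] at by_parts
  simp_rw [← mul_assoc (f _ : ℂ), intervalIntegral.integral_mul_const] at by_parts
  rw [fcoef, fcoef]
  linear_combination (1 / (2 * Real.pi : ℂ)) * by_parts

theorem memSobolev_zero_fcoef {g : ℝ → ℝ}
    (hg : MemLp g 2 (volume.restrict (Ioc (-Real.pi) Real.pi))) : MemSobolev 0 (fcoef g) := by
  have parseval := hasSum_sq_fourierCoeff ((memLp_circleLift hg).toLp _)
  simpa only [MemSobolev, Real.rpow_zero, one_mul, fourierCoeff_circleLift,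
    fourierCoeff_congr_ae (memLp_circleLift hg).coeFn_toLp] using parseval.summable

theorem rpow_add_one_mul_sq_norm_fcoef {f : ℝ → ℝ} (hf : ContDiff ℝ 1 f)
    (hper : Function.Periodic f (2 * Real.pi)) (s : ℝ) (k : ℤ) :
    (1 + (k : ℝ) ^ 2) ^ (s + 1) * ‖fcoef f k‖ ^ 2 =
      (1 + (k : ℝ) ^ 2) ^ s * ‖fcoef f k‖ ^ 2 +
        (1 + (k : ℝ) ^ 2) ^ s * ‖fcoef (deriv f) k‖ ^ 2 := by
  have norm_deriv_sq : ‖fcoef (deriv f) k‖ ^ 2 = (k : ℝ) ^ 2 * ‖fcoef f k‖ ^ 2 := by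
    rw [fcoef_deriv hf hper, norm_mul, norm_mul, Complex.norm_I, one_mul, Complex.norm_intCast,
      mul_pow, sq_abs]
  rw [norm_deriv_sq, Real.rpow_add_one (by positivity)]
  ring

theorem memSobolev_add_one_iff {f : ℝ → ℝ} (hf : ContDiff ℝ 1 f)
    (hper : Function.Periodic f (2 * Real.pi)) {s : ℝ} : MemSobolev (s + 1) (fcoef f) ↔
      MemSobolev s (fcoef f) ∧ MemSobolev s (fcoef (deriv f)) := by
  simp only [MemSobolev, rpow_add_one_mul_sq_norm_fcoef hf hper]
  refine ⟨fun h => ⟨?_, ?_⟩, fun h => h.1.add h.2⟩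
  · exact h.of_nonneg_of_le (fun k => by positivity) fun k => le_add_of_nonneg_right (by positivity)
  · exact h.of_nonneg_of_le (fun k => by positivity) fun k => le_add_of_nonneg_left (by positivity)

theorem hNorm_fcoef_deriv_le {f : ℝ → ℝ} (hf : ContDiff ℝ 1 f)
    (hper : Function.Periodic f (2 * Real.pi)) {s : ℝ} (hs : MemSobolev (s + 1) (fcoef f)) :
    hNorm s (fcoef (deriv f)) ≤ hNorm (s + 1) (fcoef f) := by
  refine Real.sqrt_le_sqrt (mul_le_mul_of_nonneg_left ?_ Real.two_pi_pos.le)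
  refine Summable.tsum_le_tsum (fun k => ?_) ((memSobolev_add_one_iff hf hper).1 hs).2 hs
  rw [rpow_add_one_mul_sq_norm_fcoef hf hper]
  exact le_add_of_nonneg_left (by positivity)

theorem periodic_deriv {𝕜 F : Type*} [NontriviallyNormedField 𝕜] [NormedAddCommGroup F]
    [NormedSpace 𝕜 F] {f : 𝕜 → F} {T : 𝕜} (hper : Function.Periodic f T) :
    Function.Periodic (deriv f) T := fun x => by
  rw [← deriv_comp_add_const, funext hper]

theorem memSobolev_fcoef_of_contDiff {n : ℕ} {f : ℝ → ℝ} (hf : ContDiff ℝ n f)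
    (hper : Function.Periodic f (2 * Real.pi)) : MemSobolev n (fcoef f) := by
  induction n generalizing f with
  | zero =>
    rw [Nat.cast_zero]
    exact memSobolev_zero_fcoef (memLp_restrict_Ioc_of_continuous hf.continuous _ _ _)
  | succ n ih =>
    rw [Nat.cast_succ]
    exact (memSobolev_add_one_iff (hf.of_le (by simp)) hper).2
      ⟨ih (hf.of_le (by simp)) hper, ih hf.deriv' (periodic_deriv hper)⟩

theorem two_mul_natAbs_add_one_le (l : ℤ) :
    (2 * l.natAbs + 1 : ℝ≥0∞) ≤ 3 * ENNReal.ofReal ((1 + (l : ℝ) ^ 2) ^ (1 / 2 : ℝ)) := by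
  have natAbs_le : (l.natAbs : ℝ) ≤ √(1 + (l : ℝ) ^ 2) := by
    rw [Nat.cast_natAbs, Int.cast_abs]
    exact Real.abs_le_sqrt (by linarith)
  have one_le : 1 ≤ √(1 + (l : ℝ) ^ 2) := Real.one_le_sqrt.2 (le_add_of_nonneg_right (sq_nonneg _))
  calc (2 * l.natAbs + 1 : ℝ≥0∞) = ENNReal.ofReal (2 * l.natAbs + 1) := by
        exact_mod_cast (ENNReal.ofReal_natCast (2 * l.natAbs + 1)).symm
    _ ≤ ENNReal.ofReal (3 * √(1 + (l : ℝ) ^ 2)) := ENNReal.ofReal_le_ofReal (by linarith)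
    _ = _ := by rw [ENNReal.ofReal_mul zero_le_three, ENNReal.ofReal_ofNat, Real.sqrt_eq_rpow]

theorem ofReal_mul_tsum_mul_mul_sq_le {a : ℤ → ℂ} (ha : MemSobolev (1 / 2) a) :
    ENNReal.ofReal (2 * Real.pi) ^ 3 *
        (∑' p : ℤ × ℤ, ‖a p.1‖ₑ * ‖a p.2‖ₑ * ‖a (-p.1 - p.2)‖ₑ) ^ 2 ≤
      ENNReal.ofReal (12 * (hNorm (1 / 2) a * hNorm 0 a ^ 2) ^ 2) := by
  set c := ENNReal.ofReal (2 * Real.pi)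
  have half_le : c * ∑' l, (2 * l.natAbs + 1) * ‖a l‖ₑ ^ 2 ≤
      3 * ENNReal.ofReal (hNorm (1 / 2) a ^ 2) := by
    rw [ofReal_hNorm_sq ha, mul_left_comm, ← ENNReal.tsum_mul_left (a := 3)]
    gcongr c * ∑' l, ?_ with l
    rw [← mul_assoc]
    gcongr
    exact two_mul_natAbs_add_one_le l
  have zero_eq : c * ∑' k, ‖a k‖ₑ ^ 2 = ENNReal.ofReal (hNorm 0 a ^ 2) := by
    simp [ofReal_hNorm_sq (ha.mono one_half_pos.le), c]
  calc _ ≤ c ^ 3 * (4 * ((∑' l, (2 * l.natAbs + 1) * ‖a l‖ₑ ^ 2) * (∑' k, ‖a k‖ₑ ^ 2) ^ 2)) := by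
        gcongr
        exact tsum_mul_mul_sq_le fun k => ‖a k‖ₑ
    _ = 4 * ((c * ∑' l, (2 * l.natAbs + 1) * ‖a l‖ₑ ^ 2) * (c * ∑' k, ‖a k‖ₑ ^ 2) ^ 2) := by ring
    _ ≤ 4 * (3 * ENNReal.ofReal (hNorm (1 / 2) a ^ 2) * ENNReal.ofReal (hNorm 0 a ^ 2) ^ 2) := by
        rw [zero_eq]; gcongr
    _ = _ := by
        rw [mul_pow _ (_ ^ 2), ENNReal.ofReal_mul (by norm_num), ENNReal.ofReal_mul (by positivity),
          ENNReal.ofReal_pow (p := hNorm 0 a ^ 2) (by positivity), ENNReal.ofReal_ofNat]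
        ring

theorem abs_integral_cube_le {g : ℝ → ℝ}
    (hg : MemLp g 4 (volume.restrict (Ioc (-Real.pi) Real.pi)))
    (hs : MemSobolev (1 / 2) (fcoef g)) :
    |∫ x in (-Real.pi)..Real.pi, g x ^ 3| ≤
      2 * hNorm (1 / 2) (fcoef g) * hNorm 0 (fcoef g) ^ 2 := by
  set I := ∫ x in (-Real.pi)..Real.pi, g x ^ 3
  set N := hNorm (1 / 2) (fcoef g) * hNorm 0 (fcoef g) ^ 2
  have N_nonneg : 0 ≤ N := mul_nonneg (hNorm_nonneg _ _) (sq_nonneg _)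
  have lift_four := memLp_circleLift hg
  have lift_two : MemLp (circleLift g) 2 haarAddCircle :=
    lift_four.mono_exponent (by norm_num : (2 : ℝ≥0∞) ≤ 4)
  have : ENNReal.HolderTriple 4 4 2 := .of_toReal ⟨by norm_num, by norm_num, by norm_num⟩
  have enorm_le := enorm_integral_mul_mul_le_tsum lift_two lift_two lift_two
    (lift_four.mul lift_four)
  simp only [integral_circleLift_cube, fourierCoeff_circleLift] at enorm_le
  have ofReal_le :
      ENNReal.ofReal ((2 * Real.pi) ^ 3 * ((2 * Real.pi)⁻¹ * I) ^ 2) ≤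
        ENNReal.ofReal (12 * N ^ 2) := by
    refine le_trans ?_ (ofReal_mul_tsum_mul_mul_sq_le hs)
    rw [ENNReal.ofReal_mul (by positivity), ENNReal.ofReal_pow (by positivity),
      ← sq_abs (_ * I), ENNReal.ofReal_pow (by positivity)]
    gcongr
    rwa [← Real.norm_eq_abs, ← Complex.norm_real, ofReal_norm]
  have sq_le : 2 * Real.pi * I ^ 2 ≤ 12 * N ^ 2 := by
    rw [ENNReal.ofReal_le_ofReal_iff (by positivity)] at ofReal_le
    refine le_of_eq_of_le ?_ ofReal_le
    field_simp
  rw [mul_assoc]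
  refine abs_le_of_sq_le_sq ?_ (mul_nonneg two_pos.le N_nonneg)
  have three_mul_le : 3 * I ^ 2 ≤ Real.pi * I ^ 2 := by gcongr; exact Real.pi_gt_three.le
  linarith [mul_pow 2 N 2, sq_nonneg N]

theorem cubic_derivative_estimate_general :
    ∃ c₀ > (0 : ℝ), ∀ f : ℝ → ℝ, ContDiff ℝ 1 f → (∀ x, f (x + 2 * Real.pi) = f x) →
      MemSobolev (3 / 2) (fcoef f) →
        |∫ x in (-Real.pi)..Real.pi, deriv f x ^ 3| ≤
          c₀ * hNorm (1 / 2) (fcoef f) * hNorm (3 / 2) (fcoef f) ^ 2 := by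
  refine ⟨2, two_pos, fun f hf hper hs => ?_⟩
  have deriv_memLp : MemLp (deriv f) 4 (volume.restrict (Ioc (-Real.pi) Real.pi)) :=
    memLp_restrict_Ioc_of_continuous (hf.continuous_deriv le_rfl) _ _ _
  have three_half : (3 / 2 : ℝ) = 1 / 2 + 1 := by norm_num
  have deriv_memSobolev : MemSobolev (1 / 2) (fcoef (deriv f)) := by
    rw [three_half] at hs
    exact ((memSobolev_add_one_iff hf hper).1 hs).2
  have deriv_half : hNorm (1 / 2) (fcoef (deriv f)) ≤ hNorm (3 / 2) (fcoef f) := by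
    rw [three_half] at hs ⊢
    exact hNorm_fcoef_deriv_le hf hper hs
  have deriv_zero : hNorm 0 (fcoef (deriv f)) ≤ hNorm 1 (fcoef f) := by
    simpa using hNorm_fcoef_deriv_le (s := 0) hf hper (hs.mono (by norm_num))
  have interpolation :
      hNorm 1 (fcoef f) ^ 2 ≤ hNorm (1 / 2) (fcoef f) * hNorm (3 / 2) (fcoef f) := by
    convert hNorm_midpoint_sq_le (hs.mono (by norm_num : (1 / 2 : ℝ) ≤ 3 / 2)) hs using 3
    norm_num
  calc |∫ x in (-Real.pi)..Real.pi, deriv f x ^ 3|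
      ≤ 2 * hNorm (1 / 2) (fcoef (deriv f)) * hNorm 0 (fcoef (deriv f)) ^ 2 :=
        abs_integral_cube_le deriv_memLp deriv_memSobolev
    _ ≤ 2 * hNorm (3 / 2) (fcoef f) * hNorm 1 (fcoef f) ^ 2 := by gcongr <;> simp [hNorm_nonneg]
    _ ≤ 2 * hNorm (3 / 2) (fcoef f) * (hNorm (1 / 2) (fcoef f) * hNorm (3 / 2) (fcoef f)) := by
        gcongr; simp [hNorm_nonneg]
    _ = 2 * hNorm (1 / 2) (fcoef f) * hNorm (3 / 2) (fcoef f) ^ 2 := by ring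

end FourierCoefficients

/-- **Estimate (3.6):** `∫ (∂ₓf)³ ≤ c₀ ‖f‖_{H^{1/2}} ‖f‖²_{H^{3/2}}`. -/
theorem cubic_derivative_estimate :
    ∃ c₀ > (0:ℝ), ∀ f : ℝ → ℝ, ContDiff ℝ (⊤ : ℕ∞) f → (∀ x, f (x + 2 * Real.pi) = f x) →
      (∫ x in (-Real.pi)..Real.pi, (deriv f x) ^ 3)
        ≤ c₀ * hNorm (1/2) (fcoef f) * (hNorm (3/2) (fcoef f)) ^ 2 := by
  obtain ⟨c₀, hc₀, estimate⟩ := cubic_derivative_estimate_general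
  exact ⟨c₀, hc₀, fun f hf hper => (le_abs_self _).trans <|
    estimate f (contDiff_infty.1 hf 1) hper <|
      (memSobolev_fcoef_of_contDiff (contDiff_infty.1 hf 2) hper).mono (by norm_num)⟩
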